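/- Let F be a field, G an abelian group, and let U and V be G-graded simple F-algebras such that M(U) and M(V) satisfy ordinary polynomial identities. If U and V satisfy the same ordinary polynomial identities, then dim_{Γ(U)} U = dim_{Γ(V)} V, i.e. the dimensions of U over its graded centroid and of V over its graded centroid coincide. -/

import Mathlib

noncomputable section

variable (K : Type*) [Field K]
variable {G : Type*} [CommGroup G] [DecidableEq G]
variable {A : Type*} [NonUnitalNonAssocSemiring A] [Module K A]
  [SMulCommClass K A A] [IsScalarTower K A A]

/-- `𝒜` is a `G`-grading of the (not necessarily associative or unital) algebra `A`. -/
def IsAlgGrading (𝒜 : G → Submodule K A) : Prop :=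
  DirectSum.IsInternal 𝒜 ∧ ∀ (g h : G), ∀ a ∈ 𝒜 g, ∀ b ∈ 𝒜 h, a * b ∈ 𝒜 (g * h)

/-- A submodule is homogeneous if it is the sum of its intersections with the components. -/
def IsHomogSubmodule (𝒜 : G → Submodule K A) (I : Submodule K A) : Prop :=
  I = ⨆ g, I ⊓ 𝒜 g

/-- two-sided ideal of a nonassociative algebra -/
def IsMulIdeal (I : Submodule K A) : Prop :=
  ∀ a : A, ∀ x ∈ I, a * x ∈ I ∧ x * a ∈ I

/-- graded simple: `A·A ≠ 0` and no nontrivial homogeneous ideals. -/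
def IsGradedSimple (𝒜 : G → Submodule K A) : Prop :=
  (∃ a b : A, a * b ≠ 0) ∧
    ∀ I : Submodule K A, IsMulIdeal K I → IsHomogSubmodule K 𝒜 I → I = ⊥ ∨ I = ⊤

/-- The multiplication algebra: the subalgebra of `End_K A` generated by left and right
multiplications. -/
def MultAlg : NonUnitalSubalgebra K (Module.End K A) :=
  NonUnitalAlgebra.adjoin K
    (Set.range (LinearMap.mulLeft K (A := A)) ∪ Set.range (LinearMap.mulRight K (A := A)))

/-- The homogeneous component of degree `h` of `End_K A`: maps sending `𝒜 g` into `𝒜 (h*g)`. -/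
def endGrading (𝒜 : G → Submodule K A) (h : G) : Submodule K (Module.End K A) where
  carrier := {φ | ∀ g : G, ∀ x ∈ 𝒜 g, φ x ∈ 𝒜 (h * g)}
  add_mem' := fun hf hg g x hx => (𝒜 _).add_mem (hf g x hx) (hg g x hx)
  zero_mem' := fun g x hx => (𝒜 _).zero_mem
  smul_mem' := fun c f hf g x hx => (𝒜 _).smul_mem c (hf g x hx)

/-- The centroid of `A`: endomorphisms commuting with all left and right multiplications. -/
def centroid : Submodule K (Module.End K A) where
  carrier := {φ | ∀ a x : A, φ (a * x) = a * φ x ∧ φ (x * a) = φ x * a}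
  add_mem' := by
    intro f g hf hg a x
    refine ⟨?_, ?_⟩ <;>
      simp [LinearMap.add_apply, (hf a x).1, (hg a x).1, (hf a x).2, (hg a x).2, mul_add, add_mul]
  zero_mem' := by intro a x; simp
  smul_mem' := by
    intro c f hf a x
    refine ⟨?_, ?_⟩ <;>
      simp [LinearMap.smul_apply, (hf a x).1, (hf a x).2, mul_smul_comm, smul_mul_assoc]

/-- The graded centroid `Γ(A)`: the sums of homogeneous centroid elements. -/
def gradedCentroid (𝒜 : G → Submodule K A) : Submodule K (Module.End K A) :=
  ⨆ h : G, centroid K ⊓ endGrading K 𝒜 h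

/-- graded polynomial identity, variables indexed by `G × ℕ`, the variable `(g, i)` having
degree `g`. -/
def IsGradedPI (𝒜 : G → Submodule K A) (f : FreeNonUnitalNonAssocAlgebra K (G × ℕ)) : Prop :=
  ∀ v : G × ℕ → A, (∀ p, v p ∈ 𝒜 p.1) → FreeNonUnitalNonAssocAlgebra.lift K v f = 0

/-- ordinary polynomial identity of a not necessarily associative algebra -/
def IsPI (f : FreeNonUnitalNonAssocAlgebra K ℕ) : Prop :=
  ∀ v : ℕ → A, FreeNonUnitalNonAssocAlgebra.lift K v f = 0

/-- A subset `S` of an associative unital `K`-algebra `B` satisfies an ordinary polynomial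
identity. -/
def SatisfiesOrdinaryPI {B : Type*} [Ring B] [Algebra K B] (S : Set B) : Prop :=
  ∃ f : FreeAlgebra K ℕ, f ≠ 0 ∧
    ∀ v : ℕ → B, (∀ i, v i ∈ S) → FreeAlgebra.lift K v f = 0

/-- isomorphism of `G`-graded algebras -/
def IsGradedIso {B : Type*} [NonUnitalNonAssocSemiring B] [Module K B]
    (𝒜 : G → Submodule K A) (ℬ : G → Submodule K B) : Prop :=
  ∃ ψ : A ≃ₗ[K] B, (∀ x y : A, ψ (x * y) = ψ x * ψ y) ∧
    ∀ g : G, (𝒜 g).map (ψ : A →ₗ[K] B) = ℬ g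

end

noncomputable section

variable (K : Type*) [Field K]

/-- `f` is an ordinary (associative) polynomial identity of the subset `S` of the associative
unital algebra `B`. -/
def IsAssocPIOn {B : Type*} [Ring B] [Algebra K B] (S : Set B) (f : FreeAlgebra K ℕ) : Prop :=
  ∀ v : ℕ → B, (∀ i, v i ∈ S) → FreeAlgebra.lift K v f = 0

end

section Helpers

open scoped BigOperators

variable {F : Type*} [Field F] {G : Type*} [CommGroup G] [DecidableEq G]
variable {A : Type*} [NonUnitalNonAssocRing A] [Module F A] [SMulCommClass F A A]
  [IsScalarTower F A A]

/-- `π` is the family of projections of a grading. -/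
structure IsProjFam (𝒜 : G → Submodule F A) (π : G → A →ₗ[F] A) : Prop where
  mem : ∀ g x, π g x ∈ 𝒜 g
  same : ∀ g, ∀ x ∈ 𝒜 g, π g x = x
  ne : ∀ g k, ∀ x ∈ 𝒜 g, g ≠ k → π k x = 0
  sum : ∀ x, ∃ s : Finset G, x = ∑ g ∈ s, π g x

lemma exists_projFam (𝒜 : G → Submodule F A) (h : DirectSum.IsInternal 𝒜) :
    ∃ π : G → A →ₗ[F] A, IsProjFam 𝒜 π := by
  classical
  letI := h.chooseDecomposition
  refine ⟨fun g => (𝒜 g).subtype ∘ₗ DirectSum.component F G (fun i => 𝒜 i) g ∘ₗ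
    (DirectSum.decomposeLinearEquiv 𝒜).toLinearMap, ?_, ?_, ?_, ?_⟩
  · intro g x
    exact Subtype.mem _
  · intro g x hx
    exact DirectSum.decompose_of_mem_same 𝒜 hx
  · intro g k x hx hgk
    exact DirectSum.decompose_of_mem_ne 𝒜 hx hgk
  · intro x
    exact ⟨_, (DirectSum.sum_support_decompose 𝒜 x).symm⟩

lemma mulLeft_mem (a : A) : LinearMap.mulLeft F a ∈ MultAlg F (A := A) :=
  NonUnitalAlgebra.subset_adjoin F (Or.inl ⟨a, rfl⟩)

lemma mulRight_mem (a : A) : LinearMap.mulRight F a ∈ MultAlg F (A := A) :=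
  NonUnitalAlgebra.subset_adjoin F (Or.inr ⟨a, rfl⟩)

/-- homogeneous ideals from projections -/
lemma ideal_bot_or_top {𝒜 : G → Submodule F A} {π : G → A →ₗ[F] A} (hπ : IsProjFam 𝒜 π)
    (hs : IsGradedSimple F 𝒜) (I : Submodule F A) (hI : IsMulIdeal F I)
    (hh : ∀ x ∈ I, ∀ g, π g x ∈ I) : I = ⊥ ∨ I = ⊤ := by
  refine hs.2 I hI (le_antisymm ?_ (iSup_le fun g => inf_le_left))
  intro x hx
  obtain ⟨s, hxs⟩ := hπ.sum x
  rw [hxs]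
  exact Submodule.sum_mem _ fun g _ =>
    Submodule.mem_iSup_of_mem g ⟨hh x hx g, hπ.mem g x⟩

lemma multAlg_le_iSup {𝒜 : G → Submodule F A} (hgr : IsAlgGrading F 𝒜)
    {r : Module.End F A} (hr : r ∈ MultAlg F (A := A)) :
    r ∈ ⨆ h : G, (MultAlg F (A := A)).toSubmodule ⊓ endGrading F 𝒜 h := by
  have htop : ∀ a : A, a ∈ ⨆ g, 𝒜 g := fun a => by
    rw [hgr.1.submodule_iSup_eq_top]; trivial
  induction hr using NonUnitalAlgebra.adjoin_induction with
  | mem x hx =>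
    rcases hx with ⟨a, rfl⟩ | ⟨a, rfl⟩
    · refine Submodule.iSup_induction 𝒜 (motive := fun a => LinearMap.mulLeft F a ∈
        ⨆ h : G, (MultAlg F (A := A)).toSubmodule ⊓ endGrading F 𝒜 h) (htop a) ?_ ?_ ?_
      · intro g x hx
        exact Submodule.mem_iSup_of_mem g ⟨mulLeft_mem x, fun k y hy => hgr.2 g k x hx y hy⟩
      · have : LinearMap.mulLeft F (0 : A) = 0 := by ext; simp
        rw [this]; exact zero_mem _
      · intro x y hx hy
        have : LinearMap.mulLeft F (x + y) = LinearMap.mulLeft F x + LinearMap.mulLeft F y := by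
          ext; simp [add_mul]
        rw [this]; exact add_mem hx hy
    · refine Submodule.iSup_induction 𝒜 (motive := fun a => LinearMap.mulRight F a ∈
        ⨆ h : G, (MultAlg F (A := A)).toSubmodule ⊓ endGrading F 𝒜 h) (htop a) ?_ ?_ ?_
      · intro g x hx
        refine Submodule.mem_iSup_of_mem g ⟨mulRight_mem x, fun k y hy => ?_⟩
        rw [mul_comm]
        exact hgr.2 k g y hy x hx
      · have : LinearMap.mulRight F (0 : A) = 0 := by ext; simp
        rw [this]; exact zero_mem _
      · intro x y hx hy
        have : LinearMap.mulRight F (x + y) = LinearMap.mulRight F x + LinearMap.mulRight F y := by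
          ext; simp [mul_add]
        rw [this]; exact add_mem hx hy
  | add x y _ _ hx hy => exact add_mem hx hy
  | zero => exact zero_mem _
  | smul c x _ hx => exact Submodule.smul_mem _ c hx
  | mul x y _ _ hx hy =>
    refine Submodule.iSup_induction _ (motive := fun x => x * y ∈
        ⨆ h : G, (MultAlg F (A := A)).toSubmodule ⊓ endGrading F 𝒜 h) hx ?_ ?_ ?_
    · intro g x hx
      refine Submodule.iSup_induction _ (motive := fun y => x * y ∈
        ⨆ h : G, (MultAlg F (A := A)).toSubmodule ⊓ endGrading F 𝒜 h) hy ?_ ?_ ?_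
      · intro k y hy
        refine Submodule.mem_iSup_of_mem (g * k)
          ⟨(MultAlg F (A := A)).mul_mem hx.1 hy.1, fun l z hz => ?_⟩
        rw [mul_assoc]
        exact hx.2 _ _ (hy.2 _ _ hz)
      · rw [mul_zero]; exact zero_mem _
      · intro a b ha hb
        rw [mul_add]; exact add_mem ha hb
    · rw [zero_mul]; exact zero_mem _
    · intro a b ha hb
      rw [add_mul]; exact add_mem ha hb

/-- homogeneous components of elements of the multiplication algebra -/
lemma exists_comp {𝒜 : G → Submodule F A} {π : G → A →ₗ[F] A} (hπ : IsProjFam 𝒜 π)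
    (hgr : IsAlgGrading F 𝒜)
    {r : Module.End F A} (hr : r ∈ MultAlg F (A := A)) (h : G) :
    ∃ r' ∈ MultAlg F (A := A), ∀ g, ∀ x ∈ 𝒜 g, r' x = π (h * g) (r x) := by
  refine Submodule.iSup_induction _ (motive := fun r => ∃ r' ∈ MultAlg F (A := A),
    ∀ g, ∀ x ∈ 𝒜 g, r' x = π (h * g) (r x)) (multAlg_le_iSup hgr hr) ?_ ?_ ?_
  · intro k r hr
    by_cases hk : k = h
    · subst hk
      exact ⟨r, hr.1, fun g x hx => (hπ.same _ _ (hr.2 g x hx)).symm⟩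
    · refine ⟨0, zero_mem _, fun g x hx => ?_⟩
      rw [hπ.ne _ _ _ (hr.2 g x hx) (fun e => hk (mul_right_cancel e))]
      rfl
  · exact ⟨0, zero_mem _, fun g x hx => by simp⟩
  · rintro x y ⟨x', hx', hx⟩ ⟨y', hy', hy⟩
    exact ⟨x' + y', add_mem hx' hy', fun g z hz => by simp [hx g z hz, hy g z hz]⟩

/-- elements annihilated by everything are zero -/
lemma ann_zero {𝒜 : G → Submodule F A} {π : G → A →ₗ[F] A} (hπ : IsProjFam 𝒜 π)
    (hgr : IsAlgGrading F 𝒜) (hs : IsGradedSimple F 𝒜) (x : A)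
    (hx : ∀ r ∈ MultAlg F (A := A), r x = 0) : x = 0 := by
  let I : Submodule F A :=
    { carrier := {x | ∀ r ∈ MultAlg F (A := A), r x = 0}
      add_mem' := fun {a b} ha hb r hr => by rw [map_add, ha r hr, hb r hr, add_zero]
      zero_mem' := fun r hr => map_zero r
      smul_mem' := fun c x hx r hr => by rw [map_smul, hx r hr, smul_zero] }
  have hI : IsMulIdeal F I := by
    intro a x hx
    have h1 : a * x = 0 := hx _ (mulLeft_mem a)
    have h2 : x * a = 0 := hx _ (mulRight_mem a)
    rw [h1, h2]
    exact ⟨zero_mem _, zero_mem _⟩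
  have hh : ∀ x ∈ I, ∀ g, π g x ∈ I := by
    intro x hx g r hr
    refine Submodule.iSup_induction _ (motive := fun r => r (π g x) = 0)
      (multAlg_le_iSup hgr hr) ?_ rfl ?_
    · intro h r hr
      obtain ⟨s, hxs⟩ := hπ.sum x
      have h0 : π (h * g) (r x) = 0 := by rw [hx r hr.1, map_zero]
      have h1 : ∀ y : A, π (h * g) (r y) = r (π g y) := by
        intro y
        have hy : y ∈ ⨆ g, 𝒜 g := by
          rw [hgr.1.submodule_iSup_eq_top]; trivial
        refine Submodule.iSup_induction 𝒜
          (motive := fun y => π (h * g) (r y) = r (π g y)) hy ?_ (by simp) ?_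
        · intro k y hy
          by_cases hk : k = g
          · subst hk
            rw [hπ.same _ _ hy, hπ.same _ _ (hr.2 _ _ hy)]
          · rw [hπ.ne _ _ _ hy hk, hπ.ne _ _ _ (hr.2 _ _ hy) (fun e => hk (mul_left_cancel e)),
              map_zero]
        · intro a b ha hb
          simp only [map_add, ha, hb]
      rw [← h1, h0]
    · intro a b ha hb
      rw [LinearMap.add_apply, ha, hb, add_zero]
  rcases ideal_bot_or_top hπ hs I hI hh with h | h
  · have : x ∈ I := hx
    rw [h] at this
    simpa using this
  · exfalso
    obtain ⟨a, b, hab⟩ := hs.1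
    have : b ∈ I := by rw [h]; trivial
    exact hab (this _ (mulLeft_mem a))

/-- the orbit of a homogeneous element under the annihilator of homogeneous elements -/
lemma orbit_top {𝒜 : G → Submodule F A} {π : G → A →ₗ[F] A} (hπ : IsProjFam 𝒜 π)
    (hgr : IsAlgGrading F 𝒜) (hs : IsGradedSimple F 𝒜) {ι : Type*} (v : ι → A)
    (hv : ∀ i, ∃ g, v i ∈ 𝒜 g) (u : A) (g : G) (hu : u ∈ 𝒜 g)
    (hne : ∃ r ∈ MultAlg F (A := A), (∀ i, r (v i) = 0) ∧ r u ≠ 0) (y : A) :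
    ∃ r ∈ MultAlg F (A := A), (∀ i, r (v i) = 0) ∧ r u = y := by
  let I : Submodule F A :=
    { carrier := {y | ∃ r ∈ MultAlg F (A := A), (∀ i, r (v i) = 0) ∧ r u = y}
      add_mem' := by
        rintro a b ⟨r, hr, hr1, rfl⟩ ⟨s, hs, hs1, rfl⟩
        exact ⟨r + s, add_mem hr hs, fun i => by simp [hr1, hs1], rfl⟩
      zero_mem' := ⟨0, zero_mem _, fun i => rfl, rfl⟩
      smul_mem' := by
        rintro c a ⟨r, hr, hr1, rfl⟩
        exact ⟨c • r, SMulMemClass.smul_mem c hr, fun i => by simp [hr1], rfl⟩ }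
  have hI : IsMulIdeal F I := by
    rintro a x ⟨r, hr, hr1, rfl⟩
    exact ⟨⟨_, mul_mem (mulLeft_mem a) hr, fun i => by simp [hr1], rfl⟩,
      ⟨_, mul_mem (mulRight_mem a) hr, fun i => by simp [hr1], rfl⟩⟩
  have hh : ∀ x ∈ I, ∀ g, π g x ∈ I := by
    rintro x ⟨r, hr, hr1, rfl⟩ k
    obtain ⟨r', hr', h⟩ := exists_comp hπ hgr hr (k * g⁻¹)
    refine ⟨r', hr', fun i => ?_, ?_⟩
    · obtain ⟨l, hl⟩ := hv i
      rw [h l _ hl, hr1, map_zero]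
    · rw [h g u hu]; simp
  rcases ideal_bot_or_top hπ hs I hI hh with h | h
  · exfalso
    obtain ⟨r, hr, hr1, hr2⟩ := hne
    have : r u ∈ I := ⟨r, hr, hr1, rfl⟩
    rw [h] at this
    exact hr2 (by simpa using this)
  · have : y ∈ I := by rw [h]; trivial
    exact this

variable (F) in
/-- density -/
def DenseFam {n : ℕ} (v : Fin n → A) : Prop :=
  ∀ y : Fin n → A, ∃ r ∈ MultAlg F (A := A), ∀ i, r (v i) = y i

lemma multAlg_comm {r φ : Module.End F A} (hr : r ∈ MultAlg F (A := A))
    (hφ : φ ∈ centroid F (A := A)) (x : A) : r (φ x) = φ (r x) := by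
  induction hr using NonUnitalAlgebra.adjoin_induction generalizing x with
  | mem r hr =>
    rcases hr with ⟨a, rfl⟩ | ⟨a, rfl⟩
    · exact ((hφ a x).1).symm
    · exact ((hφ a x).2).symm
  | add r s _ _ h1 h2 => simp [h1, h2]
  | zero => simp
  | smul c r _ h => simp [h]
  | mul r s _ _ h1 h2 => simp [h1, h2]

lemma gradedCentroid_le (𝒜 : G → Submodule F A) : gradedCentroid F 𝒜 ≤ centroid F :=
  iSup_le fun _ => inf_le_left

lemma dense_extend {𝒜 : G → Submodule F A} {π : G → A →ₗ[F] A} (hπ : IsProjFam 𝒜 π)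
    (hgr : IsAlgGrading F 𝒜) (hs : IsGradedSimple F 𝒜) {n : ℕ} (v : Fin n → A)
    (hv : ∀ i, ∃ g, v i ∈ 𝒜 g) (hd : DenseFam F v) (u : A) (g : G) (hu : u ∈ 𝒜 g) :
    (DenseFam F (Fin.snoc (α := fun _ => A) v u)) ∨
    ∃ c : Fin n → Module.End F A, (∀ i, c i ∈ gradedCentroid F 𝒜) ∧ u = ∑ i, c i (v i) := by
  by_cases hne : ∃ r ∈ MultAlg F (A := A), (∀ i, r (v i) = 0) ∧ r u ≠ 0
  · left
    intro y
    obtain ⟨r, hr, hr1⟩ := hd (fun i => y i.castSucc)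
    obtain ⟨s, hs, hs1, hs2⟩ := orbit_top hπ hgr hs v hv u g hu hne (r u - y (Fin.last n))
    refine ⟨r - s, sub_mem hr hs, fun i => ?_⟩
    refine Fin.lastCases ?_ (fun i => ?_) i
    · simp [hs2]
    · simp [hs1, hr1]
  · right
    push Not at hne
    choose gv hgv using hv
    have key : ∀ i, ∃ φ ∈ gradedCentroid F 𝒜, ∀ r ∈ MultAlg F (A := A),
        (∀ j, j ≠ i → r (v j) = 0) → φ (r (v i)) = r u := by
      intro i
      let J : Submodule F (Module.End F A) :=
        { carrier := {r | r ∈ MultAlg F (A := A) ∧ ∀ j, j ≠ i → r (v j) = 0}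
          add_mem' := fun {a b} ha hb => ⟨add_mem ha.1 hb.1, fun j hj => by
            simp [ha.2 j hj, hb.2 j hj]⟩
          zero_mem' := ⟨zero_mem _, fun j hj => rfl⟩
          smul_mem' := fun c x hx => ⟨SMulMemClass.smul_mem c hx.1, fun j hj => by
            simp [hx.2 j hj]⟩ }
      let ev : A → J →ₗ[F] A := fun x => (LinearMap.applyₗ x) ∘ₗ J.subtype
      have hsurj : Function.Surjective (ev (v i)) := by
        intro y
        obtain ⟨r, hr, hr1⟩ := hd (fun j => if j = i then y else 0)
        refine ⟨⟨r, hr, fun j hj => by rw [hr1, if_neg hj]⟩, ?_⟩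
        change r (v i) = y
        rw [hr1, if_pos rfl]
      obtain ⟨t, ht⟩ := LinearMap.exists_rightInverse_of_surjective (ev (v i))
        (LinearMap.range_eq_top.2 hsurj)
      have hφ : ∀ r ∈ MultAlg F (A := A),
        (∀ j, j ≠ i → r (v j) = 0) → (ev u ∘ₗ t) (r (v i)) = r u := by
        intro r hr hr1
        have h1 : (t (r (v i)) : Module.End F A) (v i) = r (v i) :=
          LinearMap.congr_fun ht (r (v i))
        have h2 := (t (r (v i))).2
        have h3 := hne ((t (r (v i)) : Module.End F A) - r) (sub_mem h2.1 hr) (fun j => by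
          by_cases hj : j = i
          · subst hj; simp [h1]
          · simp [h2.2 j hj, hr1 j hj])
        have h4 : (t (r (v i)) : Module.End F A) u = r u := by
          simpa [sub_eq_zero] using h3
        exact h4
      refine ⟨ev u ∘ₗ t, ?_, hφ⟩
      refine Submodule.mem_iSup_of_mem (g * (gv i)⁻¹) ⟨?_, ?_⟩
      · intro a x
        obtain ⟨⟨r, hr, hr1⟩, rfl⟩ := hsurj x
        change (ev u ∘ₗ t) (a * r (v i)) = a * (ev u ∘ₗ t) (r (v i)) ∧
          (ev u ∘ₗ t) (r (v i) * a) = (ev u ∘ₗ t) (r (v i)) * a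
        rw [hφ r hr hr1]
        exact ⟨hφ _ (mul_mem (mulLeft_mem a) hr) (fun j hj => by simp [hr1 j hj]),
          hφ _ (mul_mem (mulRight_mem a) hr) (fun j hj => by simp [hr1 j hj])⟩
      · intro k x hx
        obtain ⟨⟨r, hr, hr1⟩, rfl⟩ := hsurj x
        change (ev u ∘ₗ t) (r (v i)) ∈ _
        change r (v i) ∈ 𝒜 k at hx
        obtain ⟨r', hr', h⟩ := exists_comp hπ hgr hr (k * (gv i)⁻¹)
        have h1 : r' (v i) = r (v i) := by
          rw [h _ _ (hgv i), inv_mul_cancel_right, hπ.same _ _ hx]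
        rw [← h1, hφ r' hr' (fun j hj => by rw [h _ _ (hgv j), hr1 j hj, map_zero]), h g u hu]
        have : g * (gv i)⁻¹ * k = k * (gv i)⁻¹ * g := by
          rw [mul_comm, mul_comm g, mul_assoc]
        rw [this]
        exact hπ.mem _ _
    choose φ hφΓ hφ using key
    refine ⟨φ, hφΓ, ?_⟩
    rw [← sub_eq_zero]
    refine ann_zero hπ hgr hs _ fun r hr => ?_
    have hex : ∀ i, ∃ s ∈ MultAlg F (A := A), ∀ j, s (v j) = if j = i then r (v i) else 0 :=
      fun i => hd _
    choose s hsM hs1 using hex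
    have h0 := hne (r - ∑ i, s i) (sub_mem hr (sum_mem fun i _ => hsM i)) (fun j => by
      simp [LinearMap.sum_apply, hs1])
    have h1 : r u = ∑ i, s i u := by
      simpa [LinearMap.sum_apply, sub_eq_zero] using h0
    rw [map_sub, map_sum, h1, sub_eq_zero]
    refine Finset.sum_congr rfl fun i _ => ?_
    rw [multAlg_comm hr (gradedCentroid_le 𝒜 (hφΓ i)),
      ← hφ i (s i) (hsM i) (fun j hj => by rw [hs1, if_neg hj]), hs1, if_pos rfl]

lemma dense_bound [Nontrivial A]
    (hPI : SatisfiesOrdinaryPI F (MultAlg F (A := A) : Set (Module.End F A))) :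
    ∃ d : ℕ, ∀ (n : ℕ) (v : Fin n → A), DenseFam F v → n ≤ d := by
  classical
  obtain ⟨f, hf0, hf⟩ := hPI
  let e := FreeAlgebra.equivMonoidAlgebraFreeMonoid (R := F) (X := ℕ)
  have hne : e f ≠ 0 := by simpa using hf0
  obtain ⟨w, hw⟩ : ∃ w : FreeMonoid ℕ, (e f).coeff w ≠ 0 := by
    by_contra h
    push Not at h
    exact hne (MonoidAlgebra.coeff_injective (Finsupp.ext h))
  refine ⟨(FreeMonoid.toList w).length, fun n v hv => ?_⟩
  by_contra hlt
  push Not at hlt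
  set l := FreeMonoid.toList w with hl
  set d := l.length with hdl
  let E : ℕ → A := fun k => if h : k < n then v ⟨k, h⟩ else 0
  have hE : ∀ y : ℕ → A, ∃ r ∈ MultAlg F (A := A), ∀ k, k < n → r (E k) = y k := by
    intro y
    obtain ⟨r, hr, hr1⟩ := hv (fun i => y i)
    refine ⟨r, hr, fun k hk => ?_⟩
    simp only [E, dif_pos hk, hr1]
  have hρ : ∀ j : ℕ, ∃ r ∈ MultAlg F (A := A), ∀ k, k < n →
      r (E k) = if (j :: l.drop (d - k)) <:+ l then E (k + 1) else 0 := fun j => hE _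
  choose ρ hρM hρ using hρ
  have hm : ∀ m : List ℕ, ((m.map ρ).prod) (E 0) = if m <:+ l then E m.length else 0 := by
    intro m
    induction m with
    | nil => simp
    | cons j m ih =>
      rw [List.map_cons, List.prod_cons, Module.End.mul_apply, ih]
      by_cases hs : m <:+ l
      · have h1 := List.suffix_iff_eq_drop.1 hs
        have h2 : m.length ≤ d := hs.length_le
        rw [if_pos hs, hρ j _ (by omega), ← h1]
        rfl
      · rw [if_neg hs, map_zero, if_neg]
        exact fun h => hs ((List.suffix_cons j m).trans h)
  obtain ⟨y, hy⟩ := exists_ne (0 : A)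
  obtain ⟨r, hr, hr1⟩ := hE (fun k => if k = d then y else 0)
  have h0 := hf ρ hρM
  have hlift : FreeAlgebra.lift F ρ f = MonoidAlgebra.lift F (Module.End F A) (FreeMonoid ℕ)
      (FreeMonoid.lift ρ) (e f) := by
    have : FreeAlgebra.lift F ρ = (MonoidAlgebra.lift F (Module.End F A) (FreeMonoid ℕ)
      (FreeMonoid.lift ρ)).comp e.toAlgHom := by
      ext i
      simp [e, FreeAlgebra.equivMonoidAlgebraFreeMonoid]
    rw [this]; rfl
  rw [hlift, MonoidAlgebra.lift_apply] at h0
  have h1 := congrArg (fun T : Module.End F A => r (T (E 0))) h0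
  simp only [Finsupp.sum, LinearMap.sum_apply, map_sum, LinearMap.smul_apply, map_smul,
    FreeMonoid.lift_apply, hm, LinearMap.zero_apply, map_zero] at h1
  rw [Finset.sum_eq_single w] at h1
  · rw [if_pos (List.suffix_refl l), hr1 _ hlt, if_pos rfl] at h1
    exact (smul_ne_zero hw hy) h1
  · intro m _ hmw
    by_cases hs : FreeMonoid.toList m <:+ l
    · rw [if_pos hs, hr1 _ (lt_of_le_of_lt hs.length_le hlt), if_neg, smul_zero]
      intro hlen
      exact hmw (FreeMonoid.toList.injective (hs.eq_of_length hlen))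
    · rw [if_neg hs, map_zero, smul_zero]
  · intro h
    rw [Finsupp.notMem_support_iff.1 h, zero_smul]

lemma exists_dense_basis {𝒜 : G → Submodule F A}
    (hgr : IsAlgGrading F 𝒜) (hs : IsGradedSimple F 𝒜)
    (hPI : SatisfiesOrdinaryPI F (MultAlg F (A := A) : Set (Module.End F A))) :
    ∃ (n : ℕ) (v : Fin n → A), DenseFam F v ∧
      ∀ x : A, ∃ c : Fin n → Module.End F A,
          (∀ i, c i ∈ gradedCentroid F 𝒜) ∧ x = ∑ i, c i (v i) := by
  classical
  obtain ⟨π, hπ⟩ := exists_projFam 𝒜 hgr.1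
  haveI : Nontrivial A := by
    obtain ⟨a, b, hab⟩ := hs.1
    exact ⟨⟨_, _, hab⟩⟩
  obtain ⟨d, hd⟩ := dense_bound hPI
  let P : ℕ → Prop := fun n => ∃ v : Fin n → A, (∀ i, ∃ g, v i ∈ 𝒜 g) ∧ DenseFam F v
  have hP0 : P 0 := ⟨Fin.elim0, fun i => i.elim0, fun y => ⟨0, zero_mem _, fun i => i.elim0⟩⟩
  have hPb : ∀ n, P n → n ≤ d := fun n ⟨v, _, h⟩ => hd n v h
  have hPn : P (Nat.findGreatest P d) := Nat.findGreatest_spec (Nat.zero_le d) hP0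
  have hmax : ¬ P (Nat.findGreatest P d + 1) := fun h => by
    have := Nat.le_findGreatest (hPb _ h) h
    omega
  generalize Nat.findGreatest P d = n at hPn hmax
  obtain ⟨v, hv, hvd⟩ := hPn
  refine ⟨n, v, hvd, fun x => ?_⟩
  have hx : x ∈ ⨆ g, 𝒜 g := by rw [hgr.1.submodule_iSup_eq_top]; trivial
  refine Submodule.iSup_induction 𝒜 (motive := fun x => ∃ c : Fin n → Module.End F A,
          (∀ i, c i ∈ gradedCentroid F 𝒜) ∧ x = ∑ i, c i (v i)) hx ?_ ?_ ?_
  · intro g u hu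
    rcases dense_extend hπ hgr hs v hv hvd u g hu with h | h
    · exfalso
      refine hmax ⟨_, fun i => ?_, h⟩
      refine Fin.lastCases ?_ (fun i => ?_) i
      · exact ⟨g, by simpa using hu⟩
      · simpa using hv i
    · exact h
  · exact ⟨0, fun i => zero_mem _, by simp⟩
  · rintro x y ⟨c, hc, rfl⟩ ⟨c', hc', rfl⟩
    exact ⟨c + c', fun i => add_mem (hc i) (hc' i), by simp [Finset.sum_add_distrib]⟩

lemma dense_indep {𝒜 : G → Submodule F A} {n : ℕ} {v : Fin n → A} (hv : DenseFam F v)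
    (c : Fin n → Module.End F A) (hc : ∀ i, c i ∈ gradedCentroid F 𝒜)
    (h0 : ∑ i, c i (v i) = 0) (i : Fin n) : c i = 0 := by
  classical
  ext y
  obtain ⟨r, hr, hr1⟩ := hv (fun j => if j = i then y else 0)
  have h := congrArg r h0
  rw [map_sum, map_zero, Finset.sum_eq_single i] at h
  · rw [multAlg_comm hr (gradedCentroid_le 𝒜 (hc i)), hr1, if_pos rfl] at h
    simpa using h
  · intro j _ hj
    rw [multAlg_comm hr (gradedCentroid_le 𝒜 (hc j)), hr1, if_neg hj, map_zero]
  · simp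

end Helpers

section Alt

lemma alt_zero {R : Type*} [CommRing R] {M N : Type*} [AddCommGroup M] [Module R M]
    [AddCommGroup N] [Module R N] {n m : ℕ} (hmn : m < n) (w : Fin m → M)
    (hw : ∀ x : M, ∃ c : Fin m → R, x = ∑ i, c i • w i)
    (Q : M [⋀^Fin n]→ₗ[R] N) (x : Fin n → M) : Q x = 0 := by
  let p : (Fin m → R) →ₗ[R] M := Fintype.linearCombination R w
  have h0 : Q.compLinearMap p = 0 := by
    refine Module.Basis.ext_alternating (Pi.basisFun R (Fin m)) fun f hf => ?_
    have := Fintype.card_le_of_injective f hf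
    simp at this
    omega
  choose c hc using hw
  have : Q.compLinearMap p (fun i => c (x i)) = Q x := by
    rw [AlternatingMap.compLinearMap_apply]
    congr 1
    funext i
    exact (hc (x i)).symm
  rw [← this, h0]; rfl

/-- the alternating expression -/
def altExpr (R : Type*) [CommRing R] {B : Type*} [NonUnitalNonAssocRing B] [Module R B]
    [SMulCommClass R B B] [IsScalarTower R B B] {n : ℕ} (s : Module.End R B)
    (r : Fin n → Module.End R B) (x : Fin n → B) (b : B) : B :=
  ∑ σ : Equiv.Perm (Fin n), ((Equiv.Perm.sign σ : ℤˣ) : ℤ) •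
    ((List.ofFn fun i => s * LinearMap.mulLeft R (r i (x (σ i)))).prod b)

lemma altExpr_zero (R : Type*) [CommRing R] {B : Type*} [NonUnitalNonAssocRing B] [Module R B]
    [SMulCommClass R B B] [IsScalarTower R B B] {n m : ℕ} (hmn : m < n) (w : Fin m → B)
    (hw : ∀ x : B, ∃ c : Fin m → R, x = ∑ i, c i • w i) (s : Module.End R B)
    (r : Fin n → Module.End R B) (x : Fin n → B) (b : B) : altExpr R s r x b = 0 := by
  let T : Fin n → B →ₗ[R] Module.End R B := fun i =>
    LinearMap.mulLeft R s ∘ₗ LinearMap.mul R B ∘ₗ r i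
  let Q : MultilinearMap R (fun _ : Fin n => B) B :=
    (LinearMap.applyₗ b).compMultilinearMap
      ((MultilinearMap.mkPiAlgebraFin R n (Module.End R B)).compLinearMap T)
  have h := alt_zero hmn w hw (MultilinearMap.alternatization Q) x
  rw [MultilinearMap.alternatization_apply] at h
  exact h

lemma prod_intertwine {R S P B : Type*} [CommRing R] [CommRing S]
    [AddCommGroup P] [Module S P] [AddCommGroup B] [Module R B] (φ : P → B) {n : ℕ}
    (a : Fin n → Module.End S P) (b : Fin n → Module.End R B)
    (h : ∀ i p, φ (a i p) = b i (φ p)) (p : P) :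
    φ ((List.ofFn a).prod p) = (List.ofFn b).prod (φ p) := by
  induction n with
  | zero => simp
  | succ n ih =>
    simp only [List.ofFn_succ, List.prod_cons, Module.End.mul_apply]
    rw [h, ih _ _ (fun i p => h i.succ p)]

lemma altExpr_map {R S P B : Type*} [CommRing R] [CommRing S]
    [NonUnitalNonAssocRing P] [Module S P] [SMulCommClass S P P] [IsScalarTower S P P]
    [NonUnitalNonAssocRing B] [Module R B] [SMulCommClass R B B] [IsScalarTower R B B]
    (φ : P →ₙ+* B) {n : ℕ} (s : Module.End S P) (r : Fin n → Module.End S P)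
    (s' : Module.End R B) (r' : Fin n → Module.End R B)
    (hs : ∀ p, φ (s p) = s' (φ p)) (hr : ∀ i p, φ (r i p) = r' i (φ p))
    (x : Fin n → P) (b : P) :
    φ (altExpr S s r x b) = altExpr R s' r' (fun i => φ (x i)) (φ b) := by
  unfold altExpr
  rw [map_sum]
  refine Finset.sum_congr rfl fun σ _ => ?_
  rw [map_zsmul]
  congr 1
  refine prod_intertwine φ _ _ (fun i p => ?_) b
  simp [hs, hr]

end Alt

section Transfer

variable {F : Type*} [Field F] {G : Type*} [CommGroup G] [DecidableEq G]
variable {A : Type*} [NonUnitalNonAssocRing A] [Module F A] [SMulCommClass F A A]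
  [IsScalarTower F A A]

/-- the multiplication algebra elements use finitely many elements -/
lemma multAlg_finite {r : Module.End F A} (hr : r ∈ MultAlg F (A := A)) :
    ∃ S : Set A, S.Finite ∧ ∀ (P : Type _) [NonUnitalNonAssocRing P] [Module F P]
      [SMulCommClass F P P] [IsScalarTower F P P] (φ : P →ₙₐ[F] A),
      S ⊆ Set.range φ → ∃ r' ∈ MultAlg F (A := P), ∀ p, φ (r' p) = r (φ p) := by
  induction hr using NonUnitalAlgebra.adjoin_induction with
  | mem x hx =>
    rcases hx with ⟨a, rfl⟩ | ⟨a, rfl⟩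
    · refine ⟨{a}, Set.finite_singleton a, fun P _ _ _ _ φ h => ?_⟩
      obtain ⟨p, rfl⟩ := h rfl
      exact ⟨_, mulLeft_mem p, fun q => by simp⟩
    · refine ⟨{a}, Set.finite_singleton a, fun P _ _ _ _ φ h => ?_⟩
      obtain ⟨p, rfl⟩ := h rfl
      exact ⟨_, mulRight_mem p, fun q => by simp⟩
  | add x y _ _ hx hy =>
    obtain ⟨S, hS, hx⟩ := hx
    obtain ⟨T, hT, hy⟩ := hy
    refine ⟨S ∪ T, hS.union hT, fun P _ _ _ _ φ h => ?_⟩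
    obtain ⟨x', hx', hx⟩ := hx P φ (Set.subset_union_left.trans h)
    obtain ⟨y', hy', hy⟩ := hy P φ (Set.subset_union_right.trans h)
    exact ⟨x' + y', add_mem hx' hy', fun p => by simp [hx, hy]⟩
  | zero => exact ⟨∅, Set.finite_empty, fun P _ _ _ _ φ h => ⟨0, zero_mem _, fun p => by simp⟩⟩
  | smul c x _ hx =>
    obtain ⟨S, hS, hx⟩ := hx
    refine ⟨S, hS, fun P _ _ _ _ φ h => ?_⟩
    obtain ⟨x', hx', hx⟩ := hx P φ h
    exact ⟨c • x', SMulMemClass.smul_mem c hx', fun p => by simp [hx]⟩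
  | mul x y _ _ hx hy =>
    obtain ⟨S, hS, hx⟩ := hx
    obtain ⟨T, hT, hy⟩ := hy
    refine ⟨S ∪ T, hS.union hT, fun P _ _ _ _ φ h => ?_⟩
    obtain ⟨x', hx', hx⟩ := hx P φ (Set.subset_union_left.trans h)
    obtain ⟨y', hy', hy⟩ := hy P φ (Set.subset_union_right.trans h)
    exact ⟨x' * y', mul_mem hx' hy', fun p => by simp [hx, hy]⟩

lemma multAlg_push {P : Type*} [NonUnitalNonAssocRing P] [Module F P]
    [SMulCommClass F P P] [IsScalarTower F P P] (φ : P →ₙₐ[F] A) {r : Module.End F P}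
    (hr : r ∈ MultAlg F (A := P)) :
    ∃ r' ∈ MultAlg F (A := A), ∀ p, φ (r p) = r' (φ p) := by
  induction hr using NonUnitalAlgebra.adjoin_induction with
  | mem x hx =>
    rcases hx with ⟨a, rfl⟩ | ⟨a, rfl⟩
    · exact ⟨_, mulLeft_mem (φ a), fun q => by simp⟩
    · exact ⟨_, mulRight_mem (φ a), fun q => by simp⟩
  | add x y _ _ hx hy =>
    obtain ⟨x', hx', hx⟩ := hx
    obtain ⟨y', hy', hy⟩ := hy
    exact ⟨x' + y', add_mem hx' hy', fun p => by simp [hx, hy]⟩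
  | zero => exact ⟨0, zero_mem _, fun p => by simp⟩
  | smul c x _ hx =>
    obtain ⟨x', hx', hx⟩ := hx
    exact ⟨c • x', SMulMemClass.smul_mem c hx', fun p => by simp [hx]⟩
  | mul x y _ _ hx hy =>
    obtain ⟨x', hx', hx⟩ := hx
    obtain ⟨y', hy', hy⟩ := hy
    exact ⟨x' * y', mul_mem hx' hy', fun p => by simp [hx, hy]⟩

/-- the alternating identity holds in algebras of small dimension -/
lemma altExpr_zero_of_span {𝒜 : G → Submodule F A} (hgr : IsAlgGrading F 𝒜)
    (hs : IsGradedSimple F 𝒜) {n m : ℕ} (hmn : m < n) (w : Fin m → A)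
    (hw : ∀ x : A, ∃ c : Fin m → Module.End F A,
          (∀ i, c i ∈ gradedCentroid F 𝒜) ∧ x = ∑ i, c i (w i))
    (s : Module.End F A) (hsM : s ∈ MultAlg F (A := A))
    (r : Fin n → Module.End F A) (hr : ∀ i, r i ∈ MultAlg F (A := A)) (x : Fin n → A) (b : A) :
    altExpr F s r x b = 0 := by
  have hcomm : ∀ φ ∈ gradedCentroid F 𝒜, ∀ ψ ∈ gradedCentroid F 𝒜, φ * ψ = ψ * φ := by
    intro φ hφ ψ hψ
    have hφ := gradedCentroid_le 𝒜 hφ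
    have hψ := gradedCentroid_le 𝒜 hψ
    obtain ⟨π, hπ⟩ := exists_projFam 𝒜 hgr.1
    ext y
    rw [← sub_eq_zero]
    refine ann_zero hπ hgr hs _ fun t ht => ?_
    rw [map_sub, sub_eq_zero]
    simp only [Module.End.mul_apply]
    induction ht using NonUnitalAlgebra.adjoin_induction generalizing y with
    | mem t ht =>
      rcases ht with ⟨a, rfl⟩ | ⟨a, rfl⟩
      · change a * φ (ψ y) = a * ψ (φ y)
        rw [← (hφ a _).1, (hφ (ψ y) a).2, ← (hψ (φ a) y).1, ← (hφ y a).2, (hφ a y).1, (hψ a _).1]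
      · change φ (ψ y) * a = ψ (φ y) * a
        rw [← (hφ a _).2, (hφ (ψ y) a).1, ← (hψ (φ a) y).2, ← (hφ y a).1, (hφ a y).2, (hψ a _).2]
    | add r s _ _ h1 h2 => simp [h1, h2]
    | zero => simp
    | smul c r _ h => simp [h]
    | mul r s _ _ h1 h2 => simp [h1, h2]
  let Γ : Subalgebra F (Module.End F A) :=
    { carrier := gradedCentroid F 𝒜
      add_mem' := add_mem
      mul_mem' := by
        intro x y hx hy
        refine Submodule.iSup_induction _ (motive := fun x => x * y ∈ gradedCentroid F 𝒜)
          hx ?_ ?_ ?_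
        · intro g x hx
          refine Submodule.iSup_induction _ (motive := fun y => x * y ∈ gradedCentroid F 𝒜)
            hy ?_ ?_ ?_
          · intro k y hy
            refine Submodule.mem_iSup_of_mem (g * k) ⟨fun a z => ?_, fun l z hz => ?_⟩
            · simp [(hy.1 a z).1, (hy.1 a z).2, (hx.1 a (y z)).1, (hx.1 a (y z)).2]
            · rw [mul_assoc]
              exact hx.2 _ _ (hy.2 _ _ hz)
          · rw [mul_zero]; exact zero_mem _
          · intro a b ha hb
            rw [mul_add]; exact add_mem ha hb
        · rw [zero_mul]; exact zero_mem _
        · intro a b ha hb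
          rw [add_mul]; exact add_mem ha hb
      algebraMap_mem' := fun c => Submodule.mem_iSup_of_mem 1 ⟨fun a z => by
        simp [Module.algebraMap_end_apply, mul_smul_comm, smul_mul_assoc], fun l z hz => by
        rw [one_mul]; exact (𝒜 l).smul_mem c hz⟩ }
  have hΓ : ∀ c : Γ, (c : Module.End F A) ∈ centroid F := fun c => gradedCentroid_le 𝒜 c.2
  letI : CommRing Γ := { (inferInstance : Ring Γ) with
    mul_comm := fun a b => Subtype.ext (hcomm a a.2 b b.2) }
  haveI : SMulCommClass Γ A A := ⟨fun c a b => (((hΓ c) a b).1)⟩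
  haveI : IsScalarTower Γ A A := ⟨fun c a b => ((((hΓ c) b a).2)).symm⟩
  have lin : ∀ t ∈ MultAlg F (A := A), ∃ t' : Module.End Γ A, ∀ p, t p = t' p := by
    intro t ht
    exact ⟨{ toFun := t, map_add' := map_add t,
             map_smul' := fun c y => multAlg_comm ht (hΓ c) y }, fun p => rfl⟩
  obtain ⟨s', hs'⟩ := lin s hsM
  choose r' hr' using fun i => lin (r i) (hr i)
  have h1 := altExpr_map (R := Γ) (NonUnitalRingHom.id A) s r s' r' hs' hr' x b
  refine h1.trans (altExpr_zero Γ hmn w (fun y => ?_) _ _ _ _)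
  obtain ⟨c, hc, hy⟩ := hw y
  exact ⟨fun i => ⟨c i, hc i⟩, hy⟩

lemma dim_le {B : Type*} [NonUnitalNonAssocRing B] [Module F B] [SMulCommClass F B B]
    [IsScalarTower F B B] {𝒜 : G → Submodule F A} {ℬ : G → Submodule F B}
    (hgrA : IsAlgGrading F 𝒜) (hgrB : IsAlgGrading F ℬ)
    (hsimpA : IsGradedSimple F 𝒜) (hsimpB : IsGradedSimple F ℬ)
    (hsame : ∀ f : FreeNonUnitalNonAssocAlgebra F ℕ, IsPI F (A := B) f → IsPI F (A := A) f)
    {n m : ℕ} (v : Fin n → A) (hv : DenseFam F v) (w : Fin m → B)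
    (hw : ∀ x : B, ∃ c : Fin m → Module.End F B,
          (∀ i, c i ∈ gradedCentroid F ℬ) ∧ x = ∑ i, c i (w i)) : n ≤ m := by
  classical
  by_contra hmn
  push Not at hmn
  obtain ⟨π, hπ⟩ := exists_projFam 𝒜 hgrA.1
  -- homogeneous elements with nonzero product
  obtain ⟨a, b, g, hg, hab⟩ : ∃ a b : A, ∃ g, a * b ∈ 𝒜 g ∧ a * b ≠ 0 := by
    by_contra hcon
    push Not at hcon
    obtain ⟨a, b, hab⟩ := hsimpA.1
    obtain ⟨sa, ha⟩ := hπ.sum a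
    obtain ⟨sb, hb⟩ := hπ.sum b
    apply hab
    rw [ha, hb, Finset.sum_mul]
    refine Finset.sum_eq_zero fun i _ => ?_
    rw [Finset.mul_sum]
    exact Finset.sum_eq_zero fun j _ =>
      hcon _ _ _ (hgrA.2 i j _ (hπ.mem _ _) _ (hπ.mem _ _))
  obtain ⟨s, hs, -, hs1⟩ := orbit_top hπ hgrA hsimpA (ι := Empty) (fun i => i.elim)
    (fun i => i.elim) (a * b) g hg (by
      by_contra hcon
      push Not at hcon
      exact hab (ann_zero hπ hgrA hsimpA _ fun r hr => hcon r hr (fun i => i.elim))) b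
  choose r hr hr1 using fun i : Fin n => hv (fun j => if j = i then a else 0)
  obtain ⟨S0, hS0, hS⟩ := multAlg_finite hs
  choose R0 hR0 hR using fun i => multAlg_finite (hr i)
  let S : Set A := (S0 ∪ ⋃ i, R0 i) ∪ ({b} ∪ Set.range v)
  have hSf : S.Finite :=
    (hS0.union (Set.finite_iUnion hR0)).union ((Set.finite_singleton b).union (Set.finite_range v))
  obtain ⟨val, hval⟩ : ∃ val : ℕ → A, Set.range val = S :=
    (hSf.countable.exists_eq_range ⟨b, Or.inr (Or.inl rfl)⟩).imp fun _ h => h.symm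
  let φ := FreeNonUnitalNonAssocAlgebra.lift F val
  have hrange : S ⊆ Set.range φ := by
    rw [← hval]
    rintro _ ⟨i, rfl⟩
    exact ⟨FreeNonUnitalNonAssocAlgebra.of F i, FreeNonUnitalNonAssocAlgebra.lift_of_apply F val i⟩
  obtain ⟨s', hs', hss⟩ := hS _ φ (fun z hz => hrange (Or.inl (Or.inl hz)))
  choose r' hr' hrr using fun i => hR i _ φ
    (fun z hz => hrange (Or.inl (Or.inr (Set.mem_iUnion.2 ⟨i, hz⟩))))
  obtain ⟨b', hb'⟩ := hrange (Or.inr (Or.inl rfl) : b ∈ S)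
  choose x hx using fun i => hrange (Or.inr (Or.inr ⟨i, rfl⟩) : v i ∈ S)
  let f : FreeNonUnitalNonAssocAlgebra F ℕ := altExpr F s' r' x b'
  have hfB : IsPI F (A := B) f := by
    intro ν
    let ψ := FreeNonUnitalNonAssocAlgebra.lift F ν
    obtain ⟨s2, hs2, hs2'⟩ := multAlg_push ψ hs'
    choose r2 hr2 hr2' using fun i => multAlg_push ψ (hr' i)
    have := altExpr_map (R := F) (ψ : _ →ₙ+* B) s' r' s2 r2 hs2' hr2' x b'
    refine Eq.trans this ?_
    exact altExpr_zero_of_span hgrB hsimpB hmn w hw s2 hs2 r2 hr2 _ _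
  have hfA := hsame f hfB val
  have h1 := altExpr_map (R := F) (φ : _ →ₙ+* A) s' r' s r hss hrr x b'
  have h2 : altExpr F s r v b = 0 := by
    refine Eq.trans ?_ hfA
    refine Eq.trans ?_ h1.symm
    have e1 : (fun i => (φ : _ →ₙ+* A) (x i)) = v := funext hx
    have e2 : (φ : _ →ₙ+* A) b' = b := hb'
    rw [e1, e2]
  have hb0 : b ≠ 0 := fun h => hab (by rw [h, mul_zero])
  apply hb0
  rw [← h2]
  unfold altExpr
  rw [Finset.sum_eq_single 1]
  · simp only [Equiv.Perm.sign_one, Units.val_one, one_smul, Equiv.Perm.coe_one, id_eq]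
    have := prod_intertwine (R := F) (S := F) (P := A) (B := A) (fun _ : A => b)
      (fun i : Fin n => (1 : Module.End F A))
      (fun i => s * LinearMap.mulLeft F (r i (v i))) (fun i p => by simp [hr1, hs1]) b
    exact this
  · intro σ _ hσ
    obtain ⟨i, hi⟩ : ∃ i, σ i ≠ i := by
      by_contra hcon
      push Not at hcon
      exact hσ (Equiv.ext hcon)
    have : (List.ofFn fun i => s * LinearMap.mulLeft F (r i (v (σ i)))).prod = 0 := by
      refine List.prod_eq_zero (List.mem_ofFn.2 ⟨i, ?_⟩)
      rw [hr1, if_neg hi]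
      ext z
      simp
    rw [this]
    simp
  · simp

end Transfer

/-- If two `G`-graded simple algebras whose multiplication algebras satisfy ordinary polynomial
identities satisfy the same ordinary polynomial identities, then they have the same dimension
over their graded centroids: there is a common `n` and bases of `A` over `Γ(A)` and of `B` over
`Γ(B)` with `n` elements. -/
theorem same_identities_implies_same_dim_over_graded_centroid
    {F : Type*} [Field F] {G : Type*} [CommGroup G] [DecidableEq G]
    {A B : Type*}
    [NonUnitalNonAssocRing A] [Module F A] [SMulCommClass F A A] [IsScalarTower F A A]
    [NonUnitalNonAssocRing B] [Module F B] [SMulCommClass F B B] [IsScalarTower F B B]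
    (𝒜 : G → Submodule F A) (ℬ : G → Submodule F B)
    (hgrA : IsAlgGrading F 𝒜) (hgrB : IsAlgGrading F ℬ)
    (hsimpA : IsGradedSimple F 𝒜) (hsimpB : IsGradedSimple F ℬ)
    (hPIA : SatisfiesOrdinaryPI F (MultAlg F (A := A) : Set (Module.End F A)))
    (hPIB : SatisfiesOrdinaryPI F (MultAlg F (A := B) : Set (Module.End F B)))
    (hsame : ∀ f : FreeNonUnitalNonAssocAlgebra F ℕ, IsPI F (A := A) f ↔ IsPI F (A := B) f) :
    ∃ (n : ℕ) (v : Fin n → A) (w : Fin n → B),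
      -- `v` is a basis of `A` over `Γ(A)`
      (∀ x : A, ∃ c : Fin n → Module.End F A,
          (∀ i, c i ∈ gradedCentroid F 𝒜) ∧ x = ∑ i, c i (v i)) ∧
      (∀ c : Fin n → Module.End F A, (∀ i, c i ∈ gradedCentroid F 𝒜) →
          ∑ i, c i (v i) = 0 → ∀ i, c i = 0) ∧
      -- `w` is a basis of `B` over `Γ(B)`
      (∀ y : B, ∃ d : Fin n → Module.End F B,
          (∀ i, d i ∈ gradedCentroid F ℬ) ∧ y = ∑ i, d i (w i)) ∧
      (∀ d : Fin n → Module.End F B, (∀ i, d i ∈ gradedCentroid F ℬ) →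
          ∑ i, d i (w i) = 0 → ∀ i, d i = 0) := by
  obtain ⟨n, v, hv, hv1⟩ := exists_dense_basis hgrA hsimpA hPIA
  obtain ⟨m, w, hw, hw1⟩ := exists_dense_basis hgrB hsimpB hPIB
  have h1 : n ≤ m := dim_le hgrA hgrB hsimpA hsimpB (fun f => (hsame f).2) v hv w hw1
  have h2 : m ≤ n := dim_le hgrB hgrA hsimpB hsimpA (fun f => (hsame f).1) w hw v hv1
  obtain rfl : n = m := le_antisymm h1 h2
  exact ⟨n, v, w, hv1, fun c hc h => dense_indep hv c hc h, hw1,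
    fun c hc h => dense_indep hw c hc h⟩
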